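/- Let d ≥ 2, α ∈ (1,2), β ∈ (0,1), T > 0, and for 0 < t ≤ T let (P_t φ)(x) = ∫_{ℝ^d} φ(x + y) p_t(y) dy, where p_t(x) = (2π)^{−d} ∫_{ℝ^d} cos(⟨x,u⟩) e^{−tΨ(u)} du and Ψ(u) = ∫_{|y|≤1} (1 − cos(⟨u,y⟩)) |y|^{−(d+α)} dy. Then there exists a constant C < ∞ (depending only on d, α, β, T) such that for every φ ∈ C_b^β(ℝ^d) and every 0 < t ≤ T, P_t φ is twice continuously differentiable and ‖D²(P_t φ)‖_∞ ≤ C t^{−(2−β)/α} ‖φ‖_{C_b^β(ℝ^d)}. -/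

import Mathlib

open MeasureTheory Metric
open scoped RealInnerProductSpace

/-- Characteristic exponent of the truncated `α`-stable process. -/
noncomputable def Psi (d : ℕ) (α : ℝ) (u : EuclideanSpace ℝ (Fin d)) : ℝ :=
  ∫ y in Metric.closedBall (0 : EuclideanSpace ℝ (Fin d)) 1,
    (1 - Real.cos ⟪u, y⟫) / ‖y‖ ^ ((d : ℝ) + α)

/-- Transition density of the truncated `α`-stable process, via Fourier inversion. -/
noncomputable def pdens (d : ℕ) (α : ℝ) (t : ℝ) (x : EuclideanSpace ℝ (Fin d)) : ℝ :=
  ((2 * Real.pi) ^ d)⁻¹ *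
    ∫ u : EuclideanSpace ℝ (Fin d), Real.cos ⟪x, u⟫ * Real.exp (-t * Psi d α u)

/-- The semigroup `(P_t φ)(x) = ∫ φ(x+y) p_t(y) dy`. -/
noncomputable def Pt (d : ℕ) (α : ℝ) (φ : EuclideanSpace ℝ (Fin d) → ℝ) (t : ℝ)
    (x : EuclideanSpace ℝ (Fin d)) : ℝ :=
  ∫ y : EuclideanSpace ℝ (Fin d), φ (x + y) * pdens d α t y

/-- The `C_b^β` norm: supremum norm plus `β`-Hölder seminorm. -/
noncomputable def holderNorm {E : Type*} [NormedAddCommGroup E] (β : ℝ) (f : E → ℝ) : ℝ :=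
  (⨆ x : E, |f x|) +
    ⨆ p : {q : E × E // q.1 ≠ q.2}, |f p.val.1 - f p.val.2| / ‖p.val.1 - p.val.2‖ ^ β


open scoped SchwartzMap

section Part1

variable {d : ℕ}

lemma schw_dom {V : Type} [NormedAddCommGroup V] [NormedSpace ℝ V]
    (g : 𝓢(EuclideanSpace ℝ (Fin d), V)) :
    ∃ M : ℝ, ∀ x x' w : EuclideanSpace ℝ (Fin d), x' ∈ Metric.ball x 1 →
      ‖g (w - x')‖ ≤ M * (1 + ‖w - x‖) ^ (-((d : ℝ) + 1)) := by
  obtain ⟨M, hM⟩ : ∃ M : ℝ, ∀ x, (1 + ‖x‖) ^ (d + 1) * ‖g x‖ ≤ M := by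
    refine ⟨2 ^ (d + 1) * (Finset.Iic (d + 1, 0)).sup (fun m => SchwartzMap.seminorm ℝ m.1 m.2) g,
      fun x => ?_⟩
    have := SchwartzMap.one_add_le_sup_seminorm_apply (𝕜 := ℝ) (m := (d + 1, 0)) (le_refl (d + 1))
      (le_refl 0) g x
    rwa [norm_iteratedFDeriv_zero] at this
  refine ⟨M * 2 ^ (d + 1), fun x x' w hx => ?_⟩
  rw [Metric.mem_ball, dist_eq_norm] at hx
  have h1 : ‖w - x‖ ≤ ‖w - x'‖ + 1 := by
    calc ‖w - x‖ = ‖(w - x') + (x' - x)‖ := by abel_nf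
      _ ≤ _ := (norm_add_le _ _).trans (by linarith)
  have h2 : 1 + ‖w - x‖ ≤ 2 * (1 + ‖w - x'‖) := by
    have := norm_nonneg (w - x'); linarith
  have h3 : (0 : ℝ) < 1 + ‖w - x‖ := by positivity
  have h4 : (1 + ‖w - x‖) ^ (-((d : ℝ) + 1)) = ((1 + ‖w - x‖) ^ (d + 1))⁻¹ := by
    rw [Real.rpow_neg h3.le]
    norm_cast
  rw [h4, ← div_eq_mul_inv, le_div_iff₀ (by positivity)]
  calc ‖g (w - x')‖ * (1 + ‖w - x‖) ^ (d + 1) ≤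
      ‖g (w - x')‖ * (2 * (1 + ‖w - x'‖)) ^ (d + 1) := by gcongr
    _ = ((1 + ‖w - x'‖) ^ (d + 1) * ‖g (w - x')‖) * 2 ^ (d + 1) := by rw [mul_pow]; ring
    _ ≤ _ := by gcongr; exact hM _

lemma schw_int {V : Type} [NormedAddCommGroup V] [NormedSpace ℝ V]
    (f : 𝓢(EuclideanSpace ℝ (Fin d), V)) {φ : EuclideanSpace ℝ (Fin d) → ℝ} (hφ : Continuous φ)
    {K : ℝ} (hK : ∀ x, |φ x| ≤ K) (x : EuclideanSpace ℝ (Fin d)) :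
    Integrable (fun w => φ w • f (w - x)) := by
  have h1 : Integrable (fun w => f (w - x)) := f.integrable.comp_sub_right x
  refine (h1.norm.const_mul K).mono' ?_ (Filter.Eventually.of_forall fun w => ?_)
  · exact (hφ.smul (f.continuous.comp (continuous_id.sub continuous_const))).aestronglyMeasurable
  · rw [norm_smul, Real.norm_eq_abs]
    gcongr
    exact hK w

lemma schw_hasFDerivAt {V : Type} [NormedAddCommGroup V] [NormedSpace ℝ V]
    (f : 𝓢(EuclideanSpace ℝ (Fin d), V)) {φ : EuclideanSpace ℝ (Fin d) → ℝ} (hφ : Continuous φ)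
    {K : ℝ} (hK : ∀ x, |φ x| ≤ K) (x : EuclideanSpace ℝ (Fin d)) :
    HasFDerivAt (fun x => ∫ w, φ w • f (w - x))
      (-∫ w, φ w • (SchwartzMap.fderivCLM ℝ _ _ f) (w - x)) x := by
  obtain ⟨M, hM⟩ := schw_dom (SchwartzMap.fderivCLM ℝ _ _ f)
  rw [← integral_neg]
  have hK0 : 0 ≤ K := (abs_nonneg _).trans (hK 0)
  refine hasFDerivAt_integral_of_dominated_of_fderiv_le
    (F' := fun x w => - (φ w • (SchwartzMap.fderivCLM ℝ _ _ f) (w - x)))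
    (bound := fun w => K * (M * (1 + ‖w - x‖) ^ (-((d : ℝ) + 1))))
    (Metric.ball_mem_nhds x one_pos) ?_ ?_ ?_ ?_ ?_ ?_
  · exact Filter.Eventually.of_forall fun y => (schw_int f hφ hK y).aestronglyMeasurable
  · exact schw_int f hφ hK x
  · exact (schw_int _ hφ hK x).aestronglyMeasurable.neg
  · refine Filter.Eventually.of_forall fun w y hy => ?_
    rw [norm_neg, norm_smul, Real.norm_eq_abs]
    gcongr
    · exact hK w
    · exact hM x y w hy
  · refine Integrable.const_mul (Integrable.const_mul ?_ _) _
    exact (integrable_one_add_norm (E := EuclideanSpace ℝ (Fin d)) (μ := volume)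
      (r := (d : ℝ) + 1) (by simp)).comp_sub_right x
  · refine Filter.Eventually.of_forall fun w y _ => ?_
    have h1 : HasFDerivAt (fun y => w - y) (-(ContinuousLinearMap.id ℝ _)) y :=
      (hasFDerivAt_id y).const_sub w
    have h2 : HasFDerivAt f (fderiv ℝ f (w - y)) (w - y) :=
      ((f.smooth 1).differentiable (by simp) _).hasFDerivAt
    have h3 := (h2.comp y h1).const_smul (φ w)
    refine h3.congr_fderiv ?_
    ext v
    simp [SchwartzMap.fderivCLM_apply]

lemma schw_contDiff (n : ℕ) : ∀ {V : Type} [NormedAddCommGroup V] [NormedSpace ℝ V]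
    (f : 𝓢(EuclideanSpace ℝ (Fin d), V)) {φ : EuclideanSpace ℝ (Fin d) → ℝ} (_ : Continuous φ)
    {K : ℝ} (_ : ∀ x, |φ x| ≤ K),
    ContDiff ℝ n (fun x => ∫ w, φ w • f (w - x)) := by
  induction n with
  | zero =>
    intro V _ _ f φ hφ K hK
    refine contDiff_zero.2 (continuous_iff_continuousAt.2 fun x => ?_)
    exact (schw_hasFDerivAt f hφ hK x).continuousAt
  | succ n ih =>
    intro V _ _ f φ hφ K hK
    push_cast
    refine contDiff_succ_iff_hasFDerivAt.2 ⟨_, ?_, fun x => schw_hasFDerivAt f hφ hK x⟩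
    exact (ih _ hφ hK).neg

lemma schw_integral_fderiv {V : Type} [NormedAddCommGroup V] [NormedSpace ℝ V]
    (f : 𝓢(EuclideanSpace ℝ (Fin d), V)) (x : EuclideanSpace ℝ (Fin d)) :
    ∫ w, (SchwartzMap.fderivCLM ℝ _ _ f) (w - x) = 0 := by
  have h := schw_hasFDerivAt f (φ := fun _ => 1) continuous_const (K := 1) (by simp) x
  have h2 : (fun x => ∫ w, (1 : ℝ) • f (w - x)) = fun _ => ∫ w, f w := by
    ext y
    simp only [one_smul]
    exact integral_sub_right_eq_self (fun w => f w) y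
  rw [h2] at h
  have := h.unique (hasFDerivAt_const _ x)
  simpa using this

lemma schw_hess (q : 𝓢(EuclideanSpace ℝ (Fin d), ℝ)) {β : ℝ} (hβ0 : 0 < β) (hβ1 : β < 1) :
    ∃ C : ℝ, 0 ≤ C ∧ ∀ (φ : EuclideanSpace ℝ (Fin d) → ℝ) (K H : ℝ), Continuous φ →
      (∀ x, |φ x| ≤ K) → 0 ≤ H → (∀ x y, |φ x - φ y| ≤ H * ‖x - y‖ ^ β) →
      ContDiff ℝ 2 (fun x => ∫ y, φ (x + y) * q y) ∧
      ∀ x, ‖iteratedFDeriv ℝ 2 (fun x => ∫ y, φ (x + y) * q y) x‖ ≤ C * H := by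
  set q1 := SchwartzMap.fderivCLM ℝ _ _ q with hq1
  set q2 := SchwartzMap.fderivCLM ℝ _ _ q1 with hq2
  have hIntg : Integrable (fun y => ‖y‖ ^ β * ‖q2 y‖) := by
    refine (q2.integrable.norm.add (q2.integrable_pow_mul volume 1)).mono' ?_
      (Filter.Eventually.of_forall fun y => ?_)
    · exact ((continuous_norm.rpow_const (fun _ => Or.inr hβ0.le)).mul
        q2.continuous.norm).aestronglyMeasurable
    · rw [Real.norm_of_nonneg (by positivity)]
      have : ‖y‖ ^ β ≤ 1 + ‖y‖ := by
        rcases le_total ‖y‖ 1 with h | h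
        · have := Real.rpow_le_one (norm_nonneg y) h hβ0.le
          have := norm_nonneg y
          linarith
        · have := Real.rpow_le_rpow_of_exponent_le h hβ1.le
          rw [Real.rpow_one] at this
          linarith
      simp only [Pi.add_apply, pow_one]
      nlinarith [norm_nonneg (q2 y)]
  refine ⟨∫ y, ‖y‖ ^ β * ‖q2 y‖, integral_nonneg fun y => by positivity, ?_⟩
  intro φ K H hφ hK hH hHol
  have heq : (fun x => ∫ y, φ (x + y) * q y) = fun x => ∫ w, φ w • q (w - x) := by
    ext x
    rw [← integral_add_left_eq_self (μ := volume) (fun w => φ w • q (w - x)) x]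
    simp
  rw [heq]
  refine ⟨schw_contDiff 2 q hφ hK, fun x => ?_⟩
  have hf1 : fderiv ℝ (fun x => ∫ w, φ w • q (w - x)) = fun x => -∫ w, φ w • q1 (w - x) := by
    ext1 x; exact (schw_hasFDerivAt q hφ hK x).fderiv
  have hf2 : fderiv ℝ (fun x => -∫ w, φ w • q1 (w - x)) x = ∫ w, φ w • q2 (w - x) := by
    have := (schw_hasFDerivAt q1 hφ hK x).fun_neg.fderiv
    rw [neg_neg] at this
    exact this
  rw [← norm_iteratedFDeriv_fderiv, hf1, ← norm_iteratedFDeriv_fderiv, norm_iteratedFDeriv_zero,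
    hf2]
  have h0 : ∫ w, φ w • q2 (w - x) = ∫ w, (φ w - φ x) • q2 (w - x) := by
    simp_rw [sub_smul]
    have e1 : Integrable (fun w => φ x • q2 (w - x)) := (q2.integrable.comp_sub_right x).smul (φ x)
    rw [integral_sub (schw_int q2 hφ hK x) e1,
      integral_smul, schw_integral_fderiv, smul_zero, sub_zero]
  rw [h0, ← integral_add_left_eq_self (μ := volume) _ x, mul_comm, ← integral_const_mul]
  refine norm_integral_le_of_norm_le (hIntg.const_mul H) (Filter.Eventually.of_forall fun y => ?_)
  rw [norm_smul, Real.norm_eq_abs, ← mul_assoc]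
  simp only [add_sub_cancel_left]
  gcongr
  simpa using hHol (x + y) x

end Part1

section Part2

variable {d : ℕ}

lemma meas_smulRight {V : Type} [NormedAddCommGroup V] [NormedSpace ℝ V]
    (μ : Measure (EuclideanSpace ℝ (Fin d))) (k : EuclideanSpace ℝ (Fin d) → V)
    (hk : AEStronglyMeasurable k μ) :
    AEStronglyMeasurable (fun y => (innerSL ℝ y).smulRight (k y)) μ := by
  have h1 : AEStronglyMeasurable (fun y : EuclideanSpace ℝ (Fin d) => innerSL ℝ y) μ :=
    (innerSL ℝ).continuous.aestronglyMeasurable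
  exact (ContinuousLinearMap.smulRightL ℝ (EuclideanSpace ℝ (Fin d)) V).aestronglyMeasurable_comp₂
    h1 hk

lemma parI_hasFDerivAt {V : Type} [NormedAddCommGroup V] [NormedSpace ℝ V]
    (μ : Measure (EuclideanSpace ℝ (Fin d))) (k : EuclideanSpace ℝ (Fin d) → V)
    (h : ℕ → ℝ → ℝ) (b : EuclideanSpace ℝ (Fin d) → ℝ)
    (hk : AEStronglyMeasurable k μ) (hb : Integrable b μ)
    (hd : ∀ j x, HasDerivAt (h j) (h (j + 1) x) x)
    (hbd : ∀ᵐ y ∂μ, ∀ j, ∀ u : EuclideanSpace ℝ (Fin d),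
      |h j ⟪u, y⟫| * ‖y‖ ^ j * ‖k y‖ ≤ (1 + ‖u‖) ^ 2 * b y) (u : EuclideanSpace ℝ (Fin d)) :
    HasFDerivAt (fun u => ∫ y, h 0 ⟪u, y⟫ • k y ∂μ)
      (∫ y, h 1 ⟪u, y⟫ • ((innerSL ℝ y).smulRight (k y)) ∂μ) u := by
  have hc : ∀ j, Continuous (h j) := fun j =>
    continuous_iff_continuousAt.2 fun x => (hd j x).continuousAt
  have hk' := meas_smulRight μ k hk
  have hm : ∀ v, AEStronglyMeasurable (fun y => h 0 ⟪v, y⟫ • k y) μ := fun v =>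
    AEStronglyMeasurable.smul (Continuous.aestronglyMeasurable
      ((hc 0).comp (continuous_const.inner continuous_id))) hk
  refine hasFDerivAt_integral_of_dominated_of_fderiv_le
    (F' := fun u y => h 1 ⟪u, y⟫ • ((innerSL ℝ y).smulRight (k y)))
    (bound := fun y => (2 + ‖u‖) ^ 2 * b y)
    (Metric.ball_mem_nhds u one_pos) ?_ ?_ ?_ ?_ (hb.const_mul _) ?_
  · exact Filter.Eventually.of_forall hm
  · refine (hb.const_mul ((1 + ‖u‖) ^ 2)).mono' (hm u) ?_
    filter_upwards [hbd] with y hy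
    have := hy 0 u
    rw [norm_smul, Real.norm_eq_abs]
    simpa using this
  · exact AEStronglyMeasurable.smul (Continuous.aestronglyMeasurable
      ((hc 1).comp (continuous_const.inner continuous_id))) hk'
  · filter_upwards [hbd] with y hy v hv
    have h1 := hy 1 v
    rw [norm_smul, Real.norm_eq_abs, ContinuousLinearMap.norm_smulRight_apply, innerSL_apply_norm]
    rw [Metric.mem_ball, dist_eq_norm] at hv
    have h2 : ‖v‖ ≤ 1 + ‖u‖ := by
      calc ‖v‖ = ‖(v - u) + u‖ := by abel_nf
        _ ≤ _ := (norm_add_le _ _).trans (by linarith)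
    have hb0 : 0 ≤ b y := by
      have h3 : 0 ≤ (1 + ‖v‖) ^ 2 * b y := le_trans (by positivity) h1
      exact nonneg_of_mul_nonneg_right h3 (by positivity)
    calc _ ≤ (1 + ‖v‖) ^ 2 * b y := by simpa [mul_assoc] using h1
      _ ≤ _ := by gcongr ?_ ^ 2 * _; linarith
  · refine Filter.Eventually.of_forall fun y v _ => ?_
    have h1 : HasFDerivAt (fun v : EuclideanSpace ℝ (Fin d) => ⟪v, y⟫) (innerSL ℝ y) v := by
      have := (innerSL ℝ y).hasFDerivAt (x := v)
      refine this.congr_of_eventuallyEq (Filter.Eventually.of_forall fun w => ?_)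
      simp [real_inner_comm]
    have h2 := ((hd 0 ⟪v, y⟫).comp_hasFDerivAt v h1).smul_const (k y)
    refine h2.congr_fderiv ?_
    ext w
    simp [smul_smul]

lemma parI (n : ℕ) : ∀ {V : Type} [NormedAddCommGroup V] [NormedSpace ℝ V]
    (μ : Measure (EuclideanSpace ℝ (Fin d))) (k : EuclideanSpace ℝ (Fin d) → V)
    (h : ℕ → ℝ → ℝ) (b : EuclideanSpace ℝ (Fin d) → ℝ)
    (_ : AEStronglyMeasurable k μ) (_ : Integrable b μ)
    (_ : ∀ j x, HasDerivAt (h j) (h (j + 1) x) x)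
    (_ : ∀ᵐ y ∂μ, ∀ j, ∀ u : EuclideanSpace ℝ (Fin d),
      |h j ⟪u, y⟫| * ‖y‖ ^ j * ‖k y‖ ≤ (1 + ‖u‖) ^ 2 * b y),
    ContDiff ℝ n (fun u => ∫ y, h 0 ⟪u, y⟫ • k y ∂μ) ∧
    ∀ u, ‖iteratedFDeriv ℝ n (fun u => ∫ y, h 0 ⟪u, y⟫ • k y ∂μ) u‖ ≤
      (1 + ‖u‖) ^ 2 * ∫ y, b y ∂μ := by
  induction n with
  | zero =>
    intro V _ _ μ k h b hk hb hd hbd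
    refine ⟨contDiff_zero.2 (continuous_iff_continuousAt.2 fun x =>
      (parI_hasFDerivAt μ k h b hk hb hd hbd x).continuousAt), fun u => ?_⟩
    rw [norm_iteratedFDeriv_zero, ← integral_const_mul]
    refine norm_integral_le_of_norm_le (hb.const_mul _) ?_
    filter_upwards [hbd] with y hy
    rw [norm_smul, Real.norm_eq_abs]
    simpa using hy 0 u
  | succ n ih =>
    intro V _ _ μ k h b hk hb hd hbd
    have hk' := meas_smulRight μ k hk
    have hD := parI_hasFDerivAt μ k h b hk hb hd hbd
    obtain ⟨i1, i2⟩ := ih μ (fun y => (innerSL ℝ y).smulRight (k y)) (fun j => h (j + 1)) b hk' hb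
      (fun j x => hd (j + 1) x) (by
        filter_upwards [hbd] with y hy j u
        have := hy (j + 1) u
        rw [ContinuousLinearMap.norm_smulRight_apply, innerSL_apply_norm]
        calc _ = |h (j + 1) ⟪u, y⟫| * ‖y‖ ^ (j + 1) * ‖k y‖ := by ring
          _ ≤ _ := this)
    constructor
    · push_cast
      exact contDiff_succ_iff_hasFDerivAt.2 ⟨_, i1, hD⟩
    · intro u
      rw [← norm_iteratedFDeriv_fderiv]
      have : fderiv ℝ (fun u => ∫ y, h 0 ⟪u, y⟫ • k y ∂μ) =
          fun u => ∫ y, h 1 ⟪u, y⟫ • ((innerSL ℝ y).smulRight (k y)) ∂μ := by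
        ext1 u; exact (hD u).fderiv
      rw [this]
      exact i2 u

lemma integrable_levy (hd : 2 ≤ d) {α : ℝ} (hα2 : α < 2) :
    IntegrableOn (fun y : EuclideanSpace ℝ (Fin d) => ‖y‖ ^ 2 * (1 / ‖y‖ ^ ((d : ℝ) + α)))
      (Metric.closedBall 0 1) := by
  have : Nontrivial (EuclideanSpace ℝ (Fin d)) := by
    have : Nonempty (Fin d) := ⟨⟨0, by omega⟩⟩
    infer_instance
  have h1 : IntegrableOn (fun y : EuclideanSpace ℝ (Fin d) =>
      (fun r : ℝ => r ^ 2 * (1 / r ^ ((d : ℝ) + α))) ‖y‖) (Metric.ball 0 2) := by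
    refine (integrableOn_fun_norm_addHaar (E := EuclideanSpace ℝ (Fin d)) volume
      (f := fun r : ℝ => r ^ 2 * (1 / r ^ ((d : ℝ) + α)))).2 ?_
    have h2 : IntegrableOn (fun r : ℝ => r ^ (1 - α)) (Set.Ioo 0 2) :=
      (intervalIntegral.integrableOn_Ioo_rpow_iff (by norm_num)).2 (by linarith)
    refine h2.congr_fun (fun r hr => ?_) measurableSet_Ioo
    have hr0 : 0 < r := hr.1
    simp only [finrank_euclideanSpace, Fintype.card_fin, smul_eq_mul]
    rw [← Real.rpow_natCast, ← Real.rpow_natCast, one_div, ← Real.rpow_neg hr0.le,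
      ← Real.rpow_add hr0, ← Real.rpow_add hr0]
    congr 1
    rw [Nat.cast_sub (by omega)]
    push_cast
    ring
  exact h1.mono_set (Metric.closedBall_subset_ball (by norm_num))

lemma meas_k {α : ℝ} (μ : Measure (EuclideanSpace ℝ (Fin d))) :
    AEStronglyMeasurable (fun y : EuclideanSpace ℝ (Fin d) => 1 / ‖y‖ ^ ((d : ℝ) + α)) μ := by
  refine Measurable.aestronglyMeasurable ?_
  fun_prop

lemma Psi_smooth (hd : 2 ≤ d) {α : ℝ} (hα2 : α < 2) :
    ∃ M : ℝ, 0 ≤ M ∧ ∀ n : ℕ, ContDiff ℝ n (Psi d α) ∧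
      ∀ u, ‖iteratedFDeriv ℝ n (Psi d α) u‖ ≤ (1 + ‖u‖) ^ 2 * M := by
  set k : EuclideanSpace ℝ (Fin d) → ℝ := fun y => 1 / ‖y‖ ^ ((d : ℝ) + α) with hk
  set μ := (volume : Measure (EuclideanSpace ℝ (Fin d))).restrict (Metric.closedBall 0 1) with hμ
  let h : ℕ → ℝ → ℝ := fun j => match j with
    | 0 => fun x => 1 - Real.cos x
    | (j + 1) => iteratedDeriv j Real.sin
  have hPsi : Psi d α = fun u => ∫ y, h 0 ⟪u, y⟫ • k y ∂μ := by
    ext u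
    simp only [Psi, h, hk, smul_eq_mul, mul_one_div, hμ]
  have hk0 : ∀ y, 0 ≤ k y := fun y => by positivity
  refine ⟨∫ y, ‖y‖ ^ 2 * k y ∂μ, integral_nonneg fun y => mul_nonneg (by positivity) (hk0 y),
    fun n => ?_⟩
  rw [hPsi]
  refine parI n μ k h (fun y => ‖y‖ ^ 2 * k y) (meas_k μ) (integrable_levy hd hα2) ?_ ?_
  · intro j x
    match j with
    | 0 =>
      have := (Real.hasDerivAt_cos x).const_sub 1
      simpa [h] using this
    | (j + 1) =>
      simp only [h]
      rw [iteratedDeriv_succ]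
      refine DifferentiableAt.hasDerivAt ?_
      exact (Real.contDiff_sin (n := ⊤)).differentiable_iteratedDeriv j (by simp) x
  · filter_upwards [ae_restrict_mem measurableSet_closedBall] with y hy j u
    have hy1 : ‖y‖ ≤ 1 := by simpa using hy
    rw [Real.norm_of_nonneg (hk0 y), ← mul_assoc]
    refine mul_le_mul_of_nonneg_right ?_ (hk0 y)
    have hin : |⟪u, y⟫| ≤ ‖u‖ * ‖y‖ := abs_real_inner_le_norm u y
    have hu := norm_nonneg u
    have hyn := norm_nonneg y
    match j with
    | 0 =>
      simp only [h, pow_zero, mul_one]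
      rw [abs_of_nonneg (by linarith [Real.cos_le_one ⟪u, y⟫])]
      have h1 := Real.one_sub_sq_div_two_le_cos (x := ⟪u, y⟫)
      have h2 : ⟪u, y⟫ ^ 2 ≤ (‖u‖ * ‖y‖) ^ 2 := sq_le_sq.2 (by
        rwa [abs_of_nonneg (mul_nonneg hu hyn)])
      nlinarith [sq_nonneg ‖y‖, mul_nonneg hu (sq_nonneg ‖y‖), sq_nonneg (‖u‖ * ‖y‖)]
    | 1 =>
      simp only [h, iteratedDeriv_zero, pow_one]
      have h1 : |Real.sin ⟪u, y⟫| ≤ |⟪u, y⟫| := Real.abs_sin_le_abs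
      have h2 : |Real.sin ⟪u, y⟫| ≤ ‖u‖ * ‖y‖ := h1.trans hin
      calc |Real.sin ⟪u, y⟫| * ‖y‖ ≤ ‖u‖ * ‖y‖ * ‖y‖ := by gcongr
        _ = ‖u‖ * ‖y‖ ^ 2 := by ring
        _ ≤ _ := by gcongr; nlinarith
    | (j + 2) =>
      simp only [h]
      have h1 : |iteratedDeriv (j + 1) Real.sin ⟪u, y⟫| ≤ 1 :=
        Real.abs_iteratedDeriv_sin_le_one _ _
      have h2 : ‖y‖ ^ (j + 2) ≤ ‖y‖ ^ 2 := pow_le_pow_of_le_one hyn hy1 (by omega)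
      calc _ ≤ 1 * ‖y‖ ^ 2 := by gcongr
        _ ≤ _ := by gcongr; nlinarith

end Part2

section Part3

variable {d : ℕ}

lemma integrand_integrable (hd : 2 ≤ d) {α : ℝ} (hα2 : α < 2) (u : EuclideanSpace ℝ (Fin d)) :
    IntegrableOn (fun y : EuclideanSpace ℝ (Fin d) =>
      (1 - Real.cos ⟪u, y⟫) / ‖y‖ ^ ((d : ℝ) + α)) (Metric.closedBall 0 1) := by
  refine ((integrable_levy hd hα2).const_mul (‖u‖ ^ 2)).mono' ?_
    (Filter.Eventually.of_forall fun y => ?_)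
  · refine Measurable.aestronglyMeasurable ?_
    fun_prop
  · have hk0 : 0 ≤ 1 / ‖y‖ ^ ((d : ℝ) + α) := by positivity
    have hc : 0 ≤ 1 - Real.cos ⟪u, y⟫ := by linarith [Real.cos_le_one ⟪u, y⟫]
    rw [Real.norm_of_nonneg (by positivity), ← mul_assoc, div_eq_mul_one_div]
    refine mul_le_mul_of_nonneg_right ?_ hk0
    have hin : |⟪u, y⟫| ≤ ‖u‖ * ‖y‖ := abs_real_inner_le_norm u y
    have h1 := Real.one_sub_sq_div_two_le_cos (x := ⟪u, y⟫)
    have h2 : ⟪u, y⟫ ^ 2 ≤ (‖u‖ * ‖y‖) ^ 2 := sq_le_sq.2 (by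
      rwa [abs_of_nonneg (a := ‖u‖ * ‖y‖) (by positivity)])
    nlinarith [sq_nonneg (‖u‖ * ‖y‖)]

lemma integrand_nonneg {α : ℝ} (u y : EuclideanSpace ℝ (Fin d)) :
    0 ≤ (1 - Real.cos ⟪u, y⟫) / ‖y‖ ^ ((d : ℝ) + α) := by
  have hc : 0 ≤ 1 - Real.cos ⟪u, y⟫ := by linarith [Real.cos_le_one ⟪u, y⟫]
  positivity

lemma Psi_nonneg {α : ℝ} (u : EuclideanSpace ℝ (Fin d)) : 0 ≤ Psi d α u :=
  integral_nonneg fun y => integrand_nonneg u y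

lemma Psi_scale {α ρ : ℝ} (hρ : 0 < ρ) (u : EuclideanSpace ℝ (Fin d)) :
    ∫ y in Metric.closedBall (0 : EuclideanSpace ℝ (Fin d)) ρ,
      (1 - Real.cos ⟪u, y⟫) / ‖y‖ ^ ((d : ℝ) + α) = ρ ^ (-α) * Psi d α (ρ • u) := by
  have h := Measure.setIntegral_comp_smul_of_pos (volume : Measure (EuclideanSpace ℝ (Fin d)))
    (fun y => (1 - Real.cos ⟪u, y⟫) / ‖y‖ ^ ((d : ℝ) + α)) (Metric.closedBall 0 1) hρ
  rw [_root_.smul_closedBall _ _ zero_le_one, smul_zero, mul_one, Real.norm_of_nonneg hρ.le] at h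
  have h2 : ∀ x : EuclideanSpace ℝ (Fin d),
      (1 - Real.cos ⟪u, ρ • x⟫) / ‖ρ • x‖ ^ ((d : ℝ) + α) =
      (ρ ^ ((d : ℝ) + α))⁻¹ * ((1 - Real.cos ⟪ρ • u, x⟫) / ‖x‖ ^ ((d : ℝ) + α)) := by
    intro x
    rw [real_inner_smul_left, real_inner_smul_right, norm_smul, Real.norm_of_nonneg hρ.le,
      Real.mul_rpow hρ.le (norm_nonneg x)]
    ring
  simp_rw [h2] at h
  rw [integral_const_mul] at h
  change _ * Psi d α (ρ • u) = _ at h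
  simp only [finrank_euclideanSpace, Fintype.card_fin, smul_eq_mul] at h
  have h3 : (0 : ℝ) < ρ ^ d := by positivity
  rw [← mul_right_inj' (inv_ne_zero h3.ne'), ← h, ← mul_assoc]
  congr 1
  rw [Real.rpow_add hρ, Real.rpow_natCast, Real.rpow_neg hρ.le, mul_inv]

lemma Psi_split (hd : 2 ≤ d) {α ρ : ℝ} (hα2 : α < 2) (hρ : 0 < ρ) (hρ1 : ρ ≤ 1)
    (u : EuclideanSpace ℝ (Fin d)) :
    Psi d α u = ρ ^ (-α) * Psi d α (ρ • u) +
      ∫ y in Metric.closedBall (0 : EuclideanSpace ℝ (Fin d)) 1 \ Metric.closedBall 0 ρ,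
      (1 - Real.cos ⟪u, y⟫) / ‖y‖ ^ ((d : ℝ) + α) := by
  rw [← Psi_scale hρ, Psi]
  have hsub : Metric.closedBall (0 : EuclideanSpace ℝ (Fin d)) ρ ⊆ Metric.closedBall 0 1 :=
    Metric.closedBall_subset_closedBall hρ1
  have hI := integrand_integrable hd hα2 u
  rw [← setIntegral_union Set.disjoint_sdiff_right
    (measurableSet_closedBall.diff measurableSet_closedBall) (hI.mono_set hsub)
    (hI.mono_set Set.sdiff_subset), Set.union_sdiff_cancel hsub]

lemma Psi_pos (hd : 2 ≤ d) {α : ℝ} (hα2 : α < 2) (e : EuclideanSpace ℝ (Fin d)) (he : ‖e‖ = 1) :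
    0 < Psi d α e := by
  rw [Psi, setIntegral_pos_iff_support_of_nonneg_ae
    (Filter.Eventually.of_forall fun y => integrand_nonneg e y) (integrand_integrable hd hα2 e)]
  have hopen : IsOpen ({y : EuclideanSpace ℝ (Fin d) | 0 < ⟪e, y⟫} ∩ Metric.ball 0 1) :=
    (isOpen_lt continuous_const (continuous_const.inner continuous_id)).inter Metric.isOpen_ball
  have hne : ({y : EuclideanSpace ℝ (Fin d) | 0 < ⟪e, y⟫} ∩ Metric.ball 0 1).Nonempty := by
    refine ⟨(1 / 2 : ℝ) • e, ?_, ?_⟩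
    · simp [real_inner_smul_right, he]
    · simp [norm_smul, he]; norm_num
  refine (hopen.measure_pos volume hne).trans_le (measure_mono ?_)
  rintro y ⟨hy1, hy2⟩
  have hy3 : ‖y‖ < 1 := by simpa using hy2
  refine ⟨?_, Metric.ball_subset_closedBall hy2⟩
  have hy1 : 0 < ⟪e, y⟫ := hy1
  have hin : ⟪e, y⟫ ≤ ‖e‖ * ‖y‖ := real_inner_le_norm e y
  have hy0 : 0 < ‖y‖ := by
    rw [he, one_mul] at hin; linarith
  have hcos : Real.cos ⟪e, y⟫ ≠ 1 := by
    intro h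
    rw [Real.cos_eq_one_iff_of_lt_of_lt] at h
    · linarith
    · linarith [Real.pi_pos]
    · rw [he, one_mul] at hin
      linarith [Real.pi_gt_three]
  rw [Function.mem_support]
  have : 1 - Real.cos ⟪e, y⟫ ≠ 0 := fun h => hcos (by linarith)
  positivity

lemma Psi_lower (hd : 2 ≤ d) {α : ℝ} (hα1 : 1 < α) (hα2 : α < 2) :
    ∃ c : ℝ, 0 < c ∧ ∀ u, c * ‖u‖ - c ≤ Psi d α u := by
  obtain ⟨M, hM, hs⟩ := Psi_smooth hd hα2
  have hcont : Continuous (Psi d α) := contDiff_zero.1 (hs 0).1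
  have : Nonempty (Fin d) := ⟨⟨0, by omega⟩⟩
  have hne : (Metric.sphere (0 : EuclideanSpace ℝ (Fin d)) 1).Nonempty :=
    NormedSpace.sphere_nonempty.2 zero_le_one
  obtain ⟨e, he, hmin⟩ := (isCompact_sphere (0 : EuclideanSpace ℝ (Fin d)) 1).exists_isMinOn hne
    hcont.continuousOn
  have he1 : ‖e‖ = 1 := by simpa using he
  refine ⟨Psi d α e, Psi_pos hd hα2 e he1, fun u => ?_⟩
  have hpos := Psi_pos hd hα2 e he1
  rcases le_total ‖u‖ 1 with h | h
  · have := Psi_nonneg (α := α) u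
    nlinarith
  · have hu : 0 < ‖u‖ := by linarith
    have hsplit := Psi_split hd hα2 (inv_pos.2 hu) (inv_le_one_of_one_le₀ h) u
    have hn : 0 ≤ ∫ y in Metric.closedBall (0 : EuclideanSpace ℝ (Fin d)) 1 \
        Metric.closedBall 0 ‖u‖⁻¹, (1 - Real.cos ⟪u, y⟫) / ‖y‖ ^ ((d : ℝ) + α) :=
      integral_nonneg fun y => integrand_nonneg u y
    have hm : Psi d α e ≤ Psi d α (‖u‖⁻¹ • u) := by
      refine hmin ?_
      simp [norm_smul, hu.ne']
    have hp : ‖u‖ ≤ ‖u‖⁻¹ ^ (-α) := by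
      rw [Real.inv_rpow hu.le, Real.rpow_neg hu.le, inv_inv]
      simpa using Real.rpow_le_rpow_of_exponent_le h hα1.le
    calc _ ≤ ‖u‖ * Psi d α e := by nlinarith
      _ ≤ ‖u‖⁻¹ ^ (-α) * Psi d α (‖u‖⁻¹ • u) := by gcongr
      _ ≤ _ := by linarith

lemma exp_decay (hd : 2 ≤ d) {α T : ℝ} (hα1 : 1 < α) (hα2 : α < 2) (hT : 0 < T) (k : ℕ) :
    ∃ C : ℝ, ∀ u, (1 + ‖u‖) ^ k * Real.exp (-T * Psi d α u) ≤ C := by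
  obtain ⟨c, hc, hlow⟩ := Psi_lower hd hα1 hα2
  refine ⟨(k.factorial / (T * c) ^ k) * Real.exp (2 * (T * c)), fun u => ?_⟩
  have h1 := Real.pow_div_factorial_le_exp (x := T * c * (1 + ‖u‖)) (by positivity) k
  have h2 : (1 + ‖u‖) ^ k ≤ (k.factorial / (T * c) ^ k) * Real.exp (T * c * (1 + ‖u‖)) := by
    rw [mul_pow, div_le_iff₀ (by positivity)] at h1
    rw [div_mul_eq_mul_div, le_div_iff₀ (by positivity)]
    linarith
  have h3 : -T * Psi d α u ≤ T * c - T * c * ‖u‖ := by nlinarith [hlow u]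
  calc _ ≤ ((k.factorial / (T * c) ^ k) * Real.exp (T * c * (1 + ‖u‖))) *
        Real.exp (T * c - T * c * ‖u‖) := by gcongr
    _ = _ := by
      rw [mul_assoc, ← Real.exp_add]; congr 2; ring

lemma exists_schwartz_exp (hd : 2 ≤ d) {α T : ℝ} (hα1 : 1 < α) (hα2 : α < 2) (hT : 0 < T) :
    ∃ f : 𝓢(EuclideanSpace ℝ (Fin d), ℝ), ∀ u, f u = Real.exp (-T * Psi d α u) := by
  obtain ⟨M, hM, hs⟩ := Psi_smooth hd hα2
  have hg : ∀ n : ℕ, ContDiff ℝ n (fun r : ℝ => Real.exp (-T * r)) := fun n => by fun_prop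
  refine ⟨⟨fun u => Real.exp (-T * Psi d α u), ?_, ?_⟩, fun u => rfl⟩
  · refine contDiff_infty.2 fun n => ?_
    exact (hg n).comp (hs n).1
  · intro k n
    obtain ⟨C, hC⟩ := exp_decay hd hα1 hα2 hT (k + 2 * n)
    refine ⟨n.factorial * (1 + T) ^ n * (1 + M) ^ n * C, fun u => ?_⟩
    have key := norm_iteratedFDeriv_comp_le (hg n) (hs n).1 le_rfl u
      (C := (1 + T) ^ n * Real.exp (-T * Psi d α u)) (D := (1 + ‖u‖) ^ 2 * (1 + M)) (by
        intro i hi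
        rw [norm_iteratedFDeriv_eq_norm_iteratedDeriv, iteratedDeriv_exp_const_mul]
        simp only [norm_mul, norm_pow, norm_neg, Real.norm_eq_abs, abs_of_pos hT, Real.abs_exp]
        gcongr
        calc T ^ i ≤ (1 + T) ^ i := by gcongr; linarith
          _ ≤ (1 + T) ^ n := pow_le_pow_right₀ (by linarith) hi) (by
        intro i hi _
        have hu := norm_nonneg u
        have h1 : 1 ≤ (1 + ‖u‖) ^ 2 * (1 + M) := by nlinarith [mul_nonneg hu hM, mul_nonneg (sq_nonneg ‖u‖) hM]
        calc _ ≤ (1 + ‖u‖) ^ 2 * M := (hs i).2 u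
          _ ≤ (1 + ‖u‖) ^ 2 * (1 + M) := by gcongr; linarith
          _ = ((1 + ‖u‖) ^ 2 * (1 + M)) ^ 1 := (pow_one _).symm
          _ ≤ _ := pow_le_pow_right₀ h1 hi)
    change ‖u‖ ^ k * ‖iteratedFDeriv ℝ n ((fun r : ℝ => Real.exp (-T * r)) ∘ Psi d α) u‖ ≤ _
    calc _ ≤ (1 + ‖u‖) ^ k * (n.factorial * ((1 + T) ^ n * Real.exp (-T * Psi d α u)) *
          ((1 + ‖u‖) ^ 2 * (1 + M)) ^ n) := by
          gcongr
          linarith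
      _ = n.factorial * (1 + T) ^ n * (1 + M) ^ n *
          ((1 + ‖u‖) ^ (k + 2 * n) * Real.exp (-T * Psi d α u)) := by
          rw [mul_pow, ← pow_mul, pow_add]; ring
      _ ≤ _ := by gcongr; exact hC u

open scoped FourierTransform in
lemma exists_schwartz_pdens (hd : 2 ≤ d) {α T : ℝ} (hα1 : 1 < α) (hα2 : α < 2) (hT : 0 < T) :
    ∃ q : 𝓢(EuclideanSpace ℝ (Fin d), ℝ), ∀ x, q x = pdens d α T x := by
  obtain ⟨f, hf⟩ := exists_schwartz_exp hd hα1 hα2 hT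
  let fC : 𝓢(EuclideanSpace ℝ (Fin d), ℂ) := SchwartzMap.postcompCLM (𝕜 := ℝ) Complex.ofRealCLM f
  let g : 𝓢(EuclideanSpace ℝ (Fin d), ℂ) := 𝓕 fC
  let g2 : 𝓢(EuclideanSpace ℝ (Fin d), ℝ) := SchwartzMap.postcompCLM (𝕜 := ℝ) Complex.reCLM g
  have h2pi : (2 * Real.pi)⁻¹ ≠ 0 := inv_ne_zero (by positivity)
  let L : EuclideanSpace ℝ (Fin d) ≃L[ℝ] EuclideanSpace ℝ (Fin d) :=
    ContinuousLinearEquiv.smulLeft (Units.mk0 ((2 * Real.pi)⁻¹) h2pi)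
  let g3 : 𝓢(EuclideanSpace ℝ (Fin d), ℝ) := SchwartzMap.compCLMOfContinuousLinearEquiv ℝ L g2
  refine ⟨((2 * Real.pi) ^ d)⁻¹ • g3, fun x => ?_⟩
  have h1 : g3 x = (𝓕 (fun u => ((Real.exp (-T * Psi d α u) : ℝ) : ℂ)) ((2 * Real.pi)⁻¹ • x)).re := by
    have : (fun u => ((Real.exp (-T * Psi d α u) : ℝ) : ℂ)) = fC := by
      ext u
      simp only [← hf]
      rfl
    rw [this, ← SchwartzMap.fourier_coe]
    rfl
  have h2 : g3 x = ∫ u : EuclideanSpace ℝ (Fin d), Real.cos ⟪x, u⟫ * Real.exp (-T * Psi d α u) := by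
    rw [h1, Real.fourier_eq']
    have hIntg : Integrable (fun v : EuclideanSpace ℝ (Fin d) =>
        Complex.exp (((-2 * Real.pi * ⟪v, (2 * Real.pi)⁻¹ • x⟫ : ℝ) : ℂ) * Complex.I) •
          ((Real.exp (-T * Psi d α v) : ℝ) : ℂ)) := by
      refine f.integrable.norm.mono' ?_ (Filter.Eventually.of_forall fun v => ?_)
      · have hc : Continuous (fun v => Real.exp (-T * Psi d α v)) := by
          simp_rw [← hf]; exact f.continuous
        refine Continuous.aestronglyMeasurable ?_
        fun_prop
      · rw [norm_smul, Complex.norm_exp_ofReal_mul_I, one_mul, hf, Complex.norm_real]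
    have := integral_re hIntg
    simp only [RCLike.re_to_complex] at this
    rw [← this]
    congr 1
    ext v
    rw [smul_eq_mul, Complex.re_mul_ofReal, Complex.exp_ofReal_mul_I_re]
    congr 1
    rw [← Real.cos_neg, real_inner_smul_right, real_inner_comm]
    congr 1
    field_simp
  change ((2 * Real.pi) ^ d)⁻¹ * g3 x = _
  rw [h2, pdens]

end Part3

/-! ### Compound Poisson laws -/

noncomputable def convPow {d : ℕ} (lam : Measure (EuclideanSpace ℝ (Fin d))) :
    ℕ → Measure (EuclideanSpace ℝ (Fin d))
  | 0 => Measure.dirac 0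
  | n + 1 => Measure.conv lam (convPow lam n)

lemma convPow_finite {d : ℕ} (lam : Measure (EuclideanSpace ℝ (Fin d))) [IsFiniteMeasure lam]
    (n : ℕ) : IsFiniteMeasure (convPow lam n) := by
  induction n with
  | zero => unfold convPow; infer_instance
  | succ n ih => unfold convPow; infer_instance

lemma convPow_charFun {d : ℕ} (lam : Measure (EuclideanSpace ℝ (Fin d))) [IsFiniteMeasure lam]
    (n : ℕ) (u : EuclideanSpace ℝ (Fin d)) : charFun (convPow lam n) u = charFun lam u ^ n := by
  induction n with
  | zero => simp [convPow]
  | succ n ih =>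
    have := convPow_finite lam n
    rw [convPow, charFun_conv, ih, pow_succ']

lemma convPow_univ {d : ℕ} (lam : Measure (EuclideanSpace ℝ (Fin d))) [IsFiniteMeasure lam]
    (n : ℕ) : convPow lam n Set.univ = ENNReal.ofReal (lam.real Set.univ ^ n) := by
  have := convPow_finite lam n
  have h := convPow_charFun lam n 0
  rw [charFun_zero, charFun_zero] at h
  have h' : (convPow lam n).real Set.univ = lam.real Set.univ ^ n := by exact_mod_cast h
  rw [← h', ofReal_measureReal]

lemma exists_compound {d : ℕ} (lam : Measure (EuclideanSpace ℝ (Fin d))) [IsFiniteMeasure lam] :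
    ∃ π : Measure (EuclideanSpace ℝ (Fin d)), IsProbabilityMeasure π ∧
      ∀ u, charFun π u = Complex.exp (charFun lam u - (lam.real Set.univ : ℝ)) := by
  set m := lam.real Set.univ with hm
  have hm0 : 0 ≤ m := measureReal_nonneg
  let c : ℕ → ℝ := fun n => Real.exp (-m) * (1 / (n.factorial : ℝ))
  have hc : ∀ n, 0 ≤ c n := fun n => by positivity
  let ν : ℕ → Measure (EuclideanSpace ℝ (Fin d)) := fun n => ENNReal.ofReal (c n) • convPow lam n
  have hfin : IsFiniteMeasure (Measure.sum ν) := by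
    constructor
    rw [Measure.sum_apply _ MeasurableSet.univ]
    have : ∀ n, ν n Set.univ = ENNReal.ofReal (Real.exp (-m) * (m ^ n / n.factorial)) := by
      intro n
      simp only [ν, Measure.smul_apply, smul_eq_mul]
      rw [convPow_univ, ← ENNReal.ofReal_mul (hc n)]
      congr 1
      simp only [c]; ring
    simp_rw [this]
    exact ((Real.summable_pow_div_factorial m).mul_left _).tsum_ofReal_lt_top
  have key : ∀ u, charFun (Measure.sum ν) u = Complex.exp (charFun lam u - (m : ℝ)) := by
    intro u
    have hIntg : Integrable (fun x : EuclideanSpace ℝ (Fin d) => Complex.exp (⟪x, u⟫ * Complex.I))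
        (Measure.sum ν) :=
      (integrable_const (1 : ℝ)).mono (by fun_prop) (by simp [Complex.norm_exp])
    have h1 := hasSum_integral_measure hIntg
    have h2 : ∀ n, ∫ x, Complex.exp (⟪x, u⟫ * Complex.I) ∂ν n =
        Complex.exp (-(m : ℂ)) * ((charFun lam u) ^ n / n.factorial) := by
      intro n
      simp only [ν]
      rw [integral_smul_measure, ENNReal.toReal_ofReal (hc n), ← charFun_apply, convPow_charFun]
      simp only [c, Complex.real_smul]
      push_cast
      ring
    simp_rw [h2] at h1
    have h3 : HasSum (fun n : ℕ => (charFun lam u) ^ n / (n.factorial : ℂ))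
        (Complex.exp (charFun lam u)) := by
      rw [Complex.exp_eq_exp_ℂ]
      exact NormedSpace.expSeries_div_hasSum_exp _
    have h4 := h3.mul_left (Complex.exp (-(m : ℂ)))
    rw [charFun_apply, h1.unique h4, ← Complex.exp_add]
    congr 1; ring
  refine ⟨Measure.sum ν, ⟨?_⟩, key⟩
  have h0 := key 0
  rw [charFun_zero, charFun_zero, ← hm, sub_self, Complex.exp_zero] at h0
  have h0' : (Measure.sum ν).real Set.univ = 1 := by exact_mod_cast h0
  rw [← ofReal_measureReal, h0', ENNReal.ofReal_one]

lemma exists_pi {d : ℕ} {α t ρ : ℝ} (hd : 2 ≤ d) (hα2 : α < 2) (ht : 0 < t) (hρ : 0 < ρ) :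
    ∃ π : Measure (EuclideanSpace ℝ (Fin d)), IsProbabilityMeasure π ∧
      ∀ u, charFun π u = ((Real.exp (-t * ∫ y in closedBall 0 1 \ closedBall 0 ρ,
        (1 - Real.cos ⟪u, y⟫) / ‖y‖ ^ ((d : ℝ) + α)) : ℝ) : ℂ) := by
  set A : Set (EuclideanSpace ℝ (Fin d)) := closedBall 0 1 \ closedBall 0 ρ with hA
  have hAm : MeasurableSet A := measurableSet_closedBall.diff measurableSet_closedBall
  let k : EuclideanSpace ℝ (Fin d) → ℝ := fun y => t * (1 / ‖y‖ ^ ((d : ℝ) + α))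
  have hk0 : ∀ y, 0 ≤ k y := fun y => by positivity
  have hkm : Measurable k := by
    simp only [k]; fun_prop
  have hki : Integrable k (volume.restrict A) := by
    have h1 : IntegrableOn (fun y : EuclideanSpace ℝ (Fin d) =>
        t * (ρ ^ 2)⁻¹ * (‖y‖ ^ 2 * (1 / ‖y‖ ^ ((d : ℝ) + α)))) A :=
      ((integrable_levy hd hα2).mono_set Set.sdiff_subset).const_mul _
    refine Integrable.mono' h1 hkm.aestronglyMeasurable ?_
    refine (ae_restrict_iff' hAm).2 (Filter.Eventually.of_forall fun y hy => ?_)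
    rw [Real.norm_of_nonneg (hk0 y)]
    have hy' : ρ < ‖y‖ := by
      have := hy.2
      simpa using this
    have : 1 ≤ (ρ ^ 2)⁻¹ * ‖y‖ ^ 2 := by
      rw [inv_mul_eq_div, one_le_div (by positivity)]
      gcongr
    calc k y = t * 1 * (1 / ‖y‖ ^ ((d : ℝ) + α)) := by simp only [k]; ring
      _ ≤ t * ((ρ ^ 2)⁻¹ * ‖y‖ ^ 2) * (1 / ‖y‖ ^ ((d : ℝ) + α)) := by gcongr
      _ = _ := by ring
  let lam := (volume.restrict A).withDensity (fun y => ENNReal.ofReal (k y))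
  have : IsFiniteMeasure lam := isFiniteMeasure_withDensity_ofReal hki.2
  obtain ⟨π, hπ, hc⟩ := exists_compound lam
  refine ⟨π, hπ, fun u => ?_⟩
  rw [hc u, Complex.ofReal_exp]
  congr 1
  have hI : ∀ g : EuclideanSpace ℝ (Fin d) → ℂ, ∫ y, g y ∂lam = ∫ y in A, (k y) • g y := by
    intro g
    simp only [lam]
    rw [integral_withDensity_eq_integral_toReal_smul (by fun_prop) (by simp)]
    simp_rw [ENNReal.toReal_ofReal (hk0 _)]
  have hm : ((lam.real Set.univ : ℝ) : ℂ) = ((∫ y in A, k y : ℝ) : ℂ) := by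
    have h := hI (fun _ => 1)
    rw [integral_const] at h
    rw [← integral_complex_ofReal]
    simpa using h
  have hcosi : Integrable (fun y => k y * Real.cos ⟪u, y⟫) (volume.restrict A) := by
    refine hki.mono' (by fun_prop) (Filter.Eventually.of_forall fun y => ?_)
    rw [norm_mul, Real.norm_of_nonneg (hk0 y)]
    exact mul_le_of_le_one_right (hk0 y) (Real.abs_cos_le_one _)
  have hsini : Integrable (fun y => k y * Real.sin ⟪u, y⟫) (volume.restrict A) := by
    refine hki.mono' (by fun_prop) (Filter.Eventually.of_forall fun y => ?_)
    rw [norm_mul, Real.norm_of_nonneg (hk0 y)]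
    exact mul_le_of_le_one_right (hk0 y) (Real.abs_sin_le_one _)
  have hsin : ∫ y in A, k y * Real.sin ⟪u, y⟫ = 0 := by
    rw [← integral_indicator hAm]
    have h := integral_neg_eq_self (A.indicator (fun y => k y * Real.sin ⟪u, y⟫)) volume
    have h2 : ∀ y, A.indicator (fun y => k y * Real.sin ⟪u, y⟫) (-y) =
        - A.indicator (fun y => k y * Real.sin ⟪u, y⟫) y := by
      intro y
      have : -y ∈ A ↔ y ∈ A := by simp [hA]
      by_cases hy : y ∈ A
      · rw [Set.indicator_of_mem hy, Set.indicator_of_mem (this.2 hy)]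
        simp [k, inner_neg_right]
      · rw [Set.indicator_of_notMem hy, Set.indicator_of_notMem (fun h => hy (this.1 h))]
        simp
    simp_rw [h2] at h
    rw [integral_neg] at h
    linarith
  have hch : charFun lam u = ((∫ y in A, k y * Real.cos ⟪u, y⟫ : ℝ) : ℂ) := by
    rw [charFun_apply, hI]
    have : ∀ y, k y • Complex.exp (⟪y, u⟫ * Complex.I) =
        ((k y * Real.cos ⟪u, y⟫ : ℝ) : ℂ) + ((k y * Real.sin ⟪u, y⟫ : ℝ) : ℂ) * Complex.I := by
      intro y
      rw [Complex.exp_mul_I, real_inner_comm, Complex.real_smul]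
      push_cast
      ring
    simp_rw [this]
    rw [integral_add hcosi.ofReal (hsini.ofReal.mul_const _), integral_mul_const,
      integral_complex_ofReal, integral_complex_ofReal, hsin]
    simp
  rw [hch, hm, ← Complex.ofReal_sub, ← integral_sub hcosi hki, ← integral_const_mul]
  congr 1
  refine integral_congr_ae (Filter.Eventually.of_forall fun y => ?_)
  simp only [k]
  ring

/-! ### Factorization of the semigroup -/

lemma pdens_factor {d : ℕ} {α t T ρ : ℝ} (hd : 2 ≤ d) (hα1 : 1 < α) (hα2 : α < 2)
    (ht : 0 < t) (hT : 0 < T) (hρ : 0 < ρ) (hρ1 : ρ ≤ 1) (hρt : t * ρ ^ (-α) = T)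
    (π : Measure (EuclideanSpace ℝ (Fin d))) [IsProbabilityMeasure π]
    (hπ : ∀ u, charFun π u = ((Real.exp (-t * ∫ y in closedBall 0 1 \ closedBall 0 ρ,
        (1 - Real.cos ⟪u, y⟫) / ‖y‖ ^ ((d : ℝ) + α)) : ℝ) : ℂ))
    (x : EuclideanSpace ℝ (Fin d)) :
    pdens d α t x = ∫ z, (ρ ^ d)⁻¹ * pdens d α T (ρ⁻¹ • (x - z)) ∂π := by
  obtain ⟨f, hf⟩ := exists_schwartz_exp hd hα1 hα2 hT
  have hscale : ∀ x : EuclideanSpace ℝ (Fin d), (ρ ^ d)⁻¹ * pdens d α T (ρ⁻¹ • x) =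
      ((2 * Real.pi) ^ d)⁻¹ * ∫ u : EuclideanSpace ℝ (Fin d), Real.cos ⟪x, u⟫ * f (ρ • u) := by
    intro x
    have h := Measure.integral_comp_smul_of_nonneg (volume : Measure (EuclideanSpace ℝ (Fin d)))
      (fun u => Real.cos ⟪ρ⁻¹ • x, u⟫ * f u) ρ (hR := hρ.le)
    simp only [finrank_euclideanSpace, Fintype.card_fin, smul_eq_mul] at h
    unfold pdens
    simp_rw [← hf]
    rw [mul_left_comm, ← h]
    congr 1
    refine integral_congr_ae (Filter.Eventually.of_forall fun u => ?_)
    simp only [inner_smul_left, inner_smul_right]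
    congr 2
    simp
    field_simp
  simp_rw [hscale]
  rw [integral_const_mul]
  unfold pdens
  congr 1
  have hgc : Continuous fun u : EuclideanSpace ℝ (Fin d) => f (ρ • u) :=
    f.continuous.comp (continuous_const_smul ρ)
  have hgi : Integrable fun u : EuclideanSpace ℝ (Fin d) => f (ρ • u) :=
    (f.integrable (μ := volume)).comp_smul hρ.ne'
  rw [integral_integral_swap]
  · refine integral_congr_ae (Filter.Eventually.of_forall fun u => ?_)
    simp only
    rw [integral_mul_const]
    have hci : Integrable (fun z : EuclideanSpace ℝ (Fin d) => Real.cos ⟪z, u⟫) π :=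
      (integrable_const (1 : ℝ)).mono' (by fun_prop)
        (Filter.Eventually.of_forall fun z => Real.abs_cos_le_one _)
    have hsi : Integrable (fun z : EuclideanSpace ℝ (Fin d) => Real.sin ⟪z, u⟫) π :=
      (integrable_const (1 : ℝ)).mono' (by fun_prop)
        (Filter.Eventually.of_forall fun z => Real.abs_sin_le_one _)
    have hch := hπ u
    rw [charFun_apply] at hch
    have he : ∀ z : EuclideanSpace ℝ (Fin d), Complex.exp (⟪z, u⟫ * Complex.I) =
        ((Real.cos ⟪z, u⟫ : ℝ) : ℂ) + ((Real.sin ⟪z, u⟫ : ℝ) : ℂ) * Complex.I := by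
      intro z
      rw [Complex.exp_mul_I]
      push_cast
      ring
    simp_rw [he] at hch
    rw [integral_add hci.ofReal (hsi.ofReal.mul_const _), integral_mul_const,
      integral_complex_ofReal, integral_complex_ofReal] at hch
    have hre := congrArg Complex.re hch
    have him := congrArg Complex.im hch
    rw [← Complex.mk_eq_add_mul_I] at hre him
    rw [Complex.ofReal_re] at hre
    rw [Complex.ofReal_im] at him
    simp only at hre him
    have hcos : ∫ z, Real.cos ⟪x - z, u⟫ ∂π = Real.cos ⟪x, u⟫ *
        Real.exp (-t * ∫ y in closedBall 0 1 \ closedBall 0 ρ,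
        (1 - Real.cos ⟪u, y⟫) / ‖y‖ ^ ((d : ℝ) + α)) := by
      simp_rw [inner_sub_left, Real.cos_sub]
      rw [integral_add (hci.const_mul _) (hsi.const_mul _), integral_const_mul,
        integral_const_mul, him, hre, mul_zero, add_zero]
    rw [hcos, hf, mul_assoc, ← Real.exp_add, Psi_split hd hα2 hρ hρ1 u, ← hρt]
    congr 2
    ring
  · refine Integrable.mono' (g := fun p => |f (ρ • p.2)|) ?_ ?_ ?_
    · exact (hgi.abs.comp_snd π)
    · refine Continuous.aestronglyMeasurable ?_
      simp only [Function.uncurry_def]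
      exact (Real.continuous_cos.comp (by fun_prop)).mul (hgc.comp continuous_snd)
    · refine Filter.Eventually.of_forall fun p => ?_
      simp only [Function.uncurry_def, norm_mul, Real.norm_eq_abs]
      exact mul_le_of_le_one_left (abs_nonneg _) (Real.abs_cos_le_one _)

lemma conv_fubini {d : ℕ} (π : Measure (EuclideanSpace ℝ (Fin d))) [IsProbabilityMeasure π]
    {a φ : EuclideanSpace ℝ (Fin d) → ℝ} (hac : Continuous a) (hai : Integrable a)
    (hφc : Continuous φ) {K : ℝ} (hφK : ∀ x, |φ x| ≤ K) (x : EuclideanSpace ℝ (Fin d)) :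
    ∫ y, φ (x + y) * ∫ z, a (y - z) ∂π = ∫ y, (∫ z, φ (x + y + z) ∂π) * a y := by
  have hK : 0 ≤ K := (abs_nonneg _).trans (hφK 0)
  have hb : Integrable (Function.uncurry fun z y => a (y - z)) (π.prod volume) := by
    rw [integrable_prod_iff (by
      refine Continuous.aestronglyMeasurable ?_
      simp only [Function.uncurry_def]; fun_prop)]
    simp only [Function.uncurry_def]
    refine ⟨Filter.Eventually.of_forall fun z => hai.comp_sub_right z, ?_⟩
    have : ∀ z, ∫ y, ‖a (y - z)‖ = ∫ y, ‖a y‖ := fun z =>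
      integral_sub_right_eq_self (fun y => ‖a y‖) z
    simp_rw [this]
    exact integrable_const _
  have hL : Integrable (Function.uncurry fun z y => φ (x + y) * a (y - z)) (π.prod volume) := by
    refine Integrable.mono' (hb.norm.const_mul K) ?_ ?_
    · refine Continuous.aestronglyMeasurable ?_
      simp only [Function.uncurry_def]; fun_prop
    · refine Filter.Eventually.of_forall fun p => ?_
      simp only [Function.uncurry_def, norm_mul]
      exact mul_le_mul_of_nonneg_right (hφK _) (norm_nonneg _)
  have hR : Integrable (Function.uncurry fun z y => φ (x + y + z) * a y) (π.prod volume) := by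
    refine Integrable.mono' ((hai.norm.comp_snd π).const_mul K) ?_ ?_
    · refine Continuous.aestronglyMeasurable ?_
      simp only [Function.uncurry_def]; fun_prop
    · refine Filter.Eventually.of_forall fun p => ?_
      simp only [Function.uncurry_def, norm_mul]
      exact mul_le_mul_of_nonneg_right (hφK _) (norm_nonneg _)
  simp_rw [← integral_const_mul, ← integral_mul_const]
  rw [← integral_integral_swap hL, ← integral_integral_swap hR]
  refine integral_congr_ae (Filter.Eventually.of_forall fun z => ?_)
  simp only
  rw [← integral_add_right_eq_self _ z]
  refine integral_congr_ae (Filter.Eventually.of_forall fun y => ?_)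
  simp [add_assoc]

/-- Averaging preserves continuity, bounds and Hölder bounds. -/
lemma avg_props {d : ℕ} (π : Measure (EuclideanSpace ℝ (Fin d))) [IsProbabilityMeasure π]
    {φ : EuclideanSpace ℝ (Fin d) → ℝ} (hφc : Continuous φ) {K : ℝ} (hφK : ∀ x, |φ x| ≤ K)
    {H β : ℝ} (hH : ∀ x y, |φ x - φ y| ≤ H * ‖x - y‖ ^ β) :
    Continuous (fun x => ∫ z, φ (x + z) ∂π) ∧ (∀ x, |∫ z, φ (x + z) ∂π| ≤ K) ∧
    ∀ x y, |(∫ z, φ (x + z) ∂π) - ∫ z, φ (y + z) ∂π| ≤ H * ‖x - y‖ ^ β := by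
  have hi : ∀ x, Integrable (fun z => φ (x + z)) π := fun x =>
    (integrable_const K).mono' (Continuous.aestronglyMeasurable (by fun_prop))
      (Filter.Eventually.of_forall fun z => hφK _)
  refine ⟨?_, fun x => ?_, fun x y => ?_⟩
  · refine continuous_of_dominated (bound := fun _ => K) (fun x => (hi x).1)
      (fun x => Filter.Eventually.of_forall fun z => hφK _) (integrable_const K)
      (Filter.Eventually.of_forall fun z => by fun_prop)
  · have := norm_integral_le_of_norm_le_const (μ := π) (f := fun z => φ (x + z)) (C := K)
      (Filter.Eventually.of_forall fun z => hφK _)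
    simpa using this
  · rw [← integral_sub (hi x) (hi y)]
    have := norm_integral_le_of_norm_le_const (μ := π) (f := fun z => φ (x + z) - φ (y + z))
      (C := H * ‖x - y‖ ^ β) (Filter.Eventually.of_forall fun z => by
        have := hH (x + z) (y + z)
        rwa [add_sub_add_right_eq_sub] at this)
    simpa using this

lemma Pt_factor {d : ℕ} {α t T ρ : ℝ} (hd : 2 ≤ d) (hα1 : 1 < α) (hα2 : α < 2)
    (ht : 0 < t) (hT : 0 < T) (hρ : 0 < ρ) (hρ1 : ρ ≤ 1) (hρt : t * ρ ^ (-α) = T)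
    (π : Measure (EuclideanSpace ℝ (Fin d))) [IsProbabilityMeasure π]
    (hπ : ∀ u, charFun π u = ((Real.exp (-t * ∫ y in closedBall 0 1 \ closedBall 0 ρ,
        (1 - Real.cos ⟪u, y⟫) / ‖y‖ ^ ((d : ℝ) + α)) : ℝ) : ℂ))
    (q : 𝓢(EuclideanSpace ℝ (Fin d), ℝ)) (hq : ∀ x, q x = pdens d α T x)
    {φ : EuclideanSpace ℝ (Fin d) → ℝ}
    (hφc : Continuous φ) {K : ℝ} (hφK : ∀ x, |φ x| ≤ K) (x : EuclideanSpace ℝ (Fin d)) :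
    Pt d α φ t x = ∫ y, (∫ z, φ (ρ • (ρ⁻¹ • x + y) + z) ∂π) * q y := by
  unfold Pt
  simp_rw [pdens_factor hd hα1 hα2 ht hT hρ hρ1 hρt π hπ, ← hq]
  have hac : Continuous fun y : EuclideanSpace ℝ (Fin d) => (ρ ^ d)⁻¹ * q (ρ⁻¹ • y) :=
    continuous_const.mul (q.continuous.comp (continuous_const_smul _))
  have hai : Integrable fun y : EuclideanSpace ℝ (Fin d) => (ρ ^ d)⁻¹ * q (ρ⁻¹ • y) :=
    ((q.integrable (μ := volume)).comp_smul (inv_ne_zero hρ.ne')).const_mul _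
  rw [conv_fubini π hac hai hφc hφK x]
  have h := Measure.integral_comp_smul_of_nonneg (volume : Measure (EuclideanSpace ℝ (Fin d)))
      (fun y => (∫ z, φ (x + y + z) ∂π) * ((ρ ^ d)⁻¹ * q (ρ⁻¹ • y))) ρ (hR := hρ.le)
  simp only [finrank_euclideanSpace, Fintype.card_fin, smul_eq_mul] at h
  have hρd : (ρ ^ d) ≠ 0 := by positivity
  rw [inv_mul_eq_div, eq_div_iff hρd, ← integral_mul_const] at h
  rw [← h]
  refine integral_congr_ae (Filter.Eventually.of_forall fun y => ?_)
  simp only [smul_add, smul_inv_smul₀ hρ.ne', inv_smul_smul₀ hρ.ne']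
  field_simp

/-- Hessian estimate `‖D²(P_t φ)‖_∞ ≤ C t^{-(2-β)/α} ‖φ‖_{C_b^β}` for `φ ∈ C_b^β`. -/
theorem stmt_10 (d : ℕ) (hd : 2 ≤ d) (α β T : ℝ) (hα1 : 1 < α) (hα2 : α < 2)
    (hβ0 : 0 < β) (hβ1 : β < 1) (hT : 0 < T) :
    ∃ C : ℝ, ∀ φ : EuclideanSpace ℝ (Fin d) → ℝ,
      (∃ K : ℝ, ∀ x, |φ x| ≤ K) →
      (∃ K : ℝ, ∀ x y, |φ x - φ y| ≤ K * ‖x - y‖ ^ β) →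
      ∀ t : ℝ, 0 < t → t ≤ T →
        ContDiff ℝ 2 (Pt d α φ t) ∧
        ∀ x : EuclideanSpace ℝ (Fin d),
          ‖iteratedFDeriv ℝ 2 (Pt d α φ t) x‖ ≤
            C * t ^ (-((2 - β) / α)) * holderNorm β φ := by
  obtain ⟨q, hq⟩ := exists_schwartz_pdens hd hα1 hα2 hT
  obtain ⟨C0, hC0, hmain⟩ := schw_hess q hβ0 hβ1
  refine ⟨C0 * T ^ ((2 - β) / α), ?_⟩
  rintro φ ⟨K, hK⟩ ⟨L, hL⟩ t ht htT
  have hα0 : 0 < α := by linarith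
  -- Hölder bounds through the norm
  have hsup0 : 0 ≤ ⨆ x, |φ x| := Real.iSup_nonneg fun x => abs_nonneg _
  have hsem0 : 0 ≤ ⨆ p : {q : EuclideanSpace ℝ (Fin d) × EuclideanSpace ℝ (Fin d) // q.1 ≠ q.2},
      |φ p.val.1 - φ p.val.2| / ‖p.val.1 - p.val.2‖ ^ β :=
    Real.iSup_nonneg fun p => by positivity
  have hH0 : 0 ≤ holderNorm β φ := add_nonneg hsup0 hsem0
  have hbdd : BddAbove (Set.range fun p : {q : EuclideanSpace ℝ (Fin d) ×
      EuclideanSpace ℝ (Fin d) // q.1 ≠ q.2} =>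
      |φ p.val.1 - φ p.val.2| / ‖p.val.1 - p.val.2‖ ^ β) := by
    refine ⟨L, ?_⟩
    rintro _ ⟨p, rfl⟩
    have : 0 < ‖p.val.1 - p.val.2‖ := norm_pos_iff.2 (sub_ne_zero.2 p.2)
    simp only
    rw [div_le_iff₀ (by positivity)]
    exact hL _ _
  have hH : ∀ x y, |φ x - φ y| ≤ holderNorm β φ * ‖x - y‖ ^ β := by
    intro x y
    by_cases hxy : x = y
    · subst hxy
      simp only [sub_self, abs_zero]
      positivity
    · have h1 := le_ciSup hbdd ⟨(x, y), hxy⟩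
      have : 0 < ‖x - y‖ := norm_pos_iff.2 (sub_ne_zero.2 hxy)
      simp only at h1
      rw [div_le_iff₀ (by positivity)] at h1
      refine h1.trans ?_
      gcongr
      exact le_add_of_nonneg_left hsup0
  have hφc : Continuous φ := by
    rw [continuous_iff_continuousAt]
    intro x
    unfold ContinuousAt
    rw [tendsto_iff_norm_sub_tendsto_zero]
    refine squeeze_zero (fun _ => norm_nonneg _) (fun y => hH y x) ?_
    have h1 : Continuous fun y => holderNorm β φ * ‖y - x‖ ^ β :=
      continuous_const.mul ((continuous_id.sub continuous_const).norm.rpow_const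
        fun _ => Or.inr hβ0.le)
    have h2 := h1.tendsto x
    simpa [Real.zero_rpow hβ0.ne'] using h2
  -- the scale
  set ρ : ℝ := (t / T) ^ (1 / α) with hρdef
  have htT0 : 0 < t / T := by positivity
  have hρ : 0 < ρ := by positivity
  have hρ1 : ρ ≤ 1 := Real.rpow_le_one htT0.le ((div_le_one hT).2 htT) (by positivity)
  have hρt : t * ρ ^ (-α) = T := by
    rw [hρdef, ← Real.rpow_mul htT0.le]
    have : 1 / α * -α = -1 := by field_simp
    rw [this, Real.rpow_neg_one]
    field_simp
  obtain ⟨π, hπp, hπ⟩ := exists_pi (α := α) hd hα2 ht hρ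
  obtain ⟨hAc, hAK, hAH⟩ := avg_props π hφc hK hH
  obtain ⟨hG1, hG2⟩ := hmain (fun x => ∫ z, φ (ρ • x + z) ∂π) K (holderNorm β φ * ρ ^ β)
    (hAc.comp (continuous_const_smul ρ)) (fun x => hAK _) (by positivity) (fun x y => by
      refine (hAH (ρ • x) (ρ • y)).trans_eq ?_
      rw [← smul_sub, norm_smul, Real.norm_of_nonneg hρ.le,
        Real.mul_rpow hρ.le (norm_nonneg _)]
      ring)
  have hPt : Pt d α φ t = fun x => (fun x => ∫ y, (∫ z, φ (ρ • (x + y) + z) ∂π) * q y) (ρ⁻¹ • x) :=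
    funext fun x => Pt_factor hd hα1 hα2 ht hT hρ hρ1 hρt π hπ q hq hφc hK x
  rw [hPt]
  refine ⟨hG1.comp (contDiff_const_smul _), fun x => ?_⟩
  rw [iteratedFDeriv_comp_const_smul _ hG1, norm_smul, norm_pow, norm_inv,
    Real.norm_of_nonneg hρ.le]
  refine (mul_le_mul_of_nonneg_left (hG2 _) (by positivity)).trans_eq ?_
  have hpow : (ρ⁻¹) ^ 2 * ρ ^ β = T ^ ((2 - β) / α) * t ^ (-((2 - β) / α)) := by
    have h1 : (ρ⁻¹) ^ 2 * ρ ^ β = ρ ^ (-(2 - β)) := by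
      rw [neg_sub, Real.rpow_sub hρ, inv_pow, Real.rpow_ofNat]
      field_simp
    rw [h1, hρdef, ← Real.rpow_mul htT0.le]
    have h2 : 1 / α * -(2 - β) = -((2 - β) / α) := by ring
    rw [h2, Real.div_rpow ht.le hT.le, Real.rpow_neg hT.le, div_inv_eq_mul, mul_comm]
  calc _ = C0 * holderNorm β φ * ((ρ⁻¹) ^ 2 * ρ ^ β) := by ring
    _ = _ := by rw [hpow]; ring
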